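/- Let f ∈ elh(ℂ) be fixed. If {g_n} is a sequence in elh(ℂ) such that the compositions g_n ∘ f converge locally uniformly on ℂ to a function g, then there exists h ∈ elh(ℂ) with g = h ∘ f; that is, the image R_f(elh(ℂ)) = { g ∘ f : g ∈ elh(ℂ) } is a closed subset of elh(ℂ) in the topology of uniform convergence on compact subsets. (Proposition 3.16, part 2.) -/

import Mathlib

open Filter Topology

/-- `elh ℂ`: entire functions with nonvanishing derivative, normalized so `f'(0) = 1`. -/
def elh (f : ℂ → ℂ) : Prop :=
  Differentiable ℂ f ∧ (∀ z : ℂ, deriv f z ≠ 0) ∧ deriv f 0 = 1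

lemma elh_isOpenMap (f : ℂ → ℂ) (hf : Differentiable ℂ f) (h0 : ∃ z w, f z ≠ f w) :
    IsOpenMap f := by
  have ha : AnalyticOnNhd ℂ f Set.univ := fun z _ => hf.analyticAt z
  rcases ha.is_constant_or_isOpenMap with ⟨w, hw⟩ | h
  · obtain ⟨a, b, hab⟩ := h0
    exact absurd (by rw [hw, hw]) hab
  · exact h

lemma elh_const_of_omit (f : ℂ → ℂ) (hf : Differentiable ℂ f) (V : Set ℂ) (hV : IsOpen V)
    (hne : V.Nonempty) (hd : ∀ z, f z ∉ V) (z w : ℂ) : f z = f w := by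
  obtain ⟨c, hc⟩ := hne
  obtain ⟨r, hr, hb⟩ := Metric.isOpen_iff.1 hV c hc
  have hlow : ∀ z, r ≤ ‖f z - c‖ := by
    intro z
    by_contra h
    push Not at h
    exact hd z (hb (by simpa [dist_eq_norm] using h))
  have hne : ∀ z, f z - c ≠ 0 := fun z h => by
    have := hlow z
    rw [h, norm_zero] at this
    linarith
  have hdiff : Differentiable ℂ (fun z => (f z - c)⁻¹) :=
    (hf.sub_const c).inv hne
  have hbd : Bornology.IsBounded (Set.range (fun z => (f z - c)⁻¹)) := by
    refine (Metric.isBounded_closedBall (x := (0:ℂ)) (r := r⁻¹)).subset ?_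
    rintro _ ⟨z, rfl⟩
    simp only [mem_closedBall_zero_iff, norm_inv]
    exact inv_anti₀ hr (hlow z)
  have := hdiff.apply_eq_apply_of_bounded hbd z w
  simpa using this

lemma elh_totDisc (f : ℂ → ℂ) (hf : Differentiable ℂ f) (h0 : ∃ z w, f z ≠ f w) :
    IsTotallyDisconnected (Set.range f)ᶜ := by
  intro T hT hpre a ha b hb
  by_contra hab
  have hne : ∀ c ∈ T, ∀ z, f z - c ≠ 0 := fun c hc z h =>
    hT hc ⟨z, sub_eq_zero.1 h⟩
  have hdf : Differentiable ℂ (deriv f) := fun z => (hf.analyticAt z).deriv.differentiableAt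
  have hL : ∀ c ∈ T, ∃ L : ℂ → ℂ, (∀ z, HasDerivAt L (deriv f z / (f z - c)) z) ∧
      ∀ z, Complex.exp (L z) = (f z - c) / (f 0 - c) := by
    intro c hc
    have hd : Differentiable ℂ (fun z => deriv f z / (f z - c)) :=
      hdf.div (hf.sub_const c) (hne c hc)
    obtain ⟨L, hL0, hL⟩ := hd.isExactOn_univ.with_val_at 0 0
    have hL' : ∀ z, HasDerivAt L (deriv f z / (f z - c)) z := by
      first
        | exact fun z => hL z (Set.mem_univ z)
        | exact fun z => hL0 z (Set.mem_univ z)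
    have hL00 : L 0 = 0 := by
      first | exact hL0 | exact hL
    refine ⟨L, hL', fun z => ?_⟩
    have hder : ∀ z, HasDerivAt (fun z => Complex.exp (- L z) * (f z - c)) 0 z := by
      intro z
      have h1 := ((hL' z).neg.cexp).mul ((hf z).hasDerivAt.sub_const c)
      refine HasDerivAt.congr_deriv h1 ?_
      have h2 := div_mul_cancel₀ (deriv f z) (hne c hc z)
      simp only [Pi.neg_apply]
      linear_combination -Complex.exp (-L z) * h2
    have hc' := is_const_of_deriv_eq_zero (fun z => (hder z).differentiableAt)
      (fun z => (hder z).deriv) z 0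
    simp only [hL00, neg_zero, Complex.exp_zero, one_mul, Complex.exp_neg] at hc'
    rw [← hc']
    have := hne c hc z
    have := Complex.exp_ne_zero (L z)
    field_simp
  obtain ⟨La, hLa, hea⟩ := hL a ha
  obtain ⟨Lb, hLb, heb⟩ := hL b hb
  -- key fact: equal values have equal periods
  have key : ∀ z w, f z = f w → La z - La w = Lb z - Lb w := by
    intro z w hzw
    set N : T → ℂ := fun c => ∫ t in (0:ℝ)..1,
      (z - w) * (deriv f (w + t * (z - w)) / (f (w + t * (z - w)) - c)) with hN
    have hcont : Continuous (Function.uncurry fun (c : T) (t : ℝ) =>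
      (z - w) * (deriv f (w + t * (z - w)) / (f (w + t * (z - w)) - c))) := by
      have h1 := hdf.continuous
      have h2 := hf.continuous
      refine continuous_const.mul (Continuous.div ?_ ?_ ?_)
      · fun_prop
      · fun_prop
      · intro p
        exact hne _ p.1.2 _
    have hNc : Continuous N :=
      intervalIntegral.continuous_parametric_intervalIntegral_of_continuous' hcont 0 1
    have hNL : ∀ (c : T) (L : ℂ → ℂ), (∀ z, HasDerivAt L (deriv f z / (f z - c)) z) →
        N c = L z - L w := by
      intro c L hLd
      have hd : ∀ t : ℝ, HasDerivAt (fun t : ℝ => L (w + t * (z - w)))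
          ((z - w) * (deriv f (w + t * (z - w)) / (f (w + t * (z - w)) - c))) t := by
        intro t
        have h1 : HasDerivAt (fun s : ℂ => w + s * (z - w)) (z - w) (t : ℂ) := by
          simpa using ((hasDerivAt_id (t : ℂ)).mul_const (z - w)).const_add w
        have h2 := (HasDerivAt.comp (t : ℂ) (hLd _) h1).comp_ofReal
        rw [mul_comm]
        exact h2
      have := intervalIntegral.integral_eq_sub_of_hasDerivAt (a := 0) (b := 1)
        (fun t _ => hd t)
        ((hcont.comp (Continuous.prodMk_right c)).intervalIntegrable 0 1)
      rw [hN]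
      simp only
      rw [this]
      simp
    have hmem : ∀ c, N c ∈ Set.range (fun n : ℤ => (n : ℂ) * (2 * Real.pi * Complex.I)) := by
      intro c
      obtain ⟨L, hLd, hLe⟩ := hL c c.2
      have : Complex.exp (N c) = 1 := by
        rw [hNL c L hLd, Complex.exp_sub, hLe, hLe, hzw]
        have h1 := hne c c.2 w
        have h2 := hne c c.2 0
        field_simp
      obtain ⟨n, hn⟩ := Complex.exp_eq_one_iff.1 this
      exact ⟨n, hn.symm⟩
    have htd := (Set.countable_range
      (fun n : ℤ => (n : ℂ) * (2 * Real.pi * Complex.I))).isTotallyDisconnected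
    have := isPreconnected_iff_preconnectedSpace.1 hpre
    have hsub := htd (Set.range N) (by rintro _ ⟨c, rfl⟩; exact hmem c)
      (isPreconnected_range hNc)
    have := hsub ⟨⟨a, ha⟩, rfl⟩ ⟨⟨b, hb⟩, rfl⟩
    rwa [hNL ⟨a, ha⟩ La hLa, hNL ⟨b, hb⟩ Lb hLb] at this
  set M : ℂ → ℂ := fun z => La z - Lb z with hM
  have hMd : Differentiable ℂ M := fun z =>
    ((hLa z).sub (hLb z)).differentiableAt
  have hMe : ∀ z w, Complex.exp (M z) = Complex.exp (M w) → f z = f w := by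
    intro z w h
    simp only [hM, Complex.exp_sub, hea, heb] at h
    have h1 := hne a ha 0
    have h2 := hne b hb 0
    have h3 := hne b hb z
    have h4 := hne b hb w
    field_simp at h
    have h5 : (a - b) * (f z - f w) = 0 := by linear_combination h
    rcases mul_eq_zero.1 h5 with h | h
    · exact absurd (sub_eq_zero.1 h) hab
    · exact sub_eq_zero.1 h
  have hM0 : ∃ z w, M z ≠ M w := by
    obtain ⟨z, w, h⟩ := h0
    exact ⟨z, w, fun h' => h (hMe z w (by rw [h']))⟩
  have hMo := elh_isOpenMap M hMd hM0
  obtain ⟨z, w, hzw⟩ := hM0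
  refine hzw (elh_const_of_omit M hMd ((fun x => x + 2 * Real.pi * Complex.I) '' Set.range M)
    ((Homeomorph.addRight (2 * Real.pi * Complex.I)).isOpenMap _ hMo.isOpen_range)
    ⟨_, M 0, ⟨0, rfl⟩, rfl⟩ ?_ z w)
  rintro z ⟨_, ⟨w, rfl⟩, h⟩
  simp only at h
  have h1 : f z = f w := hMe z w (by rw [← h, Complex.exp_add, Complex.exp_two_pi_mul_I, mul_one])
  have h2 := key z w h1
  have h3 : (2 * Real.pi * Complex.I : ℂ) = 0 := by
    have : M z = M w := by simp only [hM]; linear_combination h2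
    rw [this] at h
    simpa using h
  exact Complex.two_pi_I_ne_zero h3

lemma elh_nhd (E : Set ℂ) (hE : IsClosed E) (htd : IsTotallyDisconnected E) (a : ℂ) :
    ∃ V : Set ℂ, IsOpen V ∧ a ∈ V ∧ Bornology.IsBounded V ∧ Disjoint (frontier V) E := by
  by_cases haE : a ∈ E
  swap
  · obtain ⟨r, hr, hb⟩ := Metric.nhds_basis_closedBall.mem_iff.1 (hE.isOpen_compl.mem_nhds haE)
    refine ⟨Metric.ball a r, Metric.isOpen_ball, Metric.mem_ball_self hr,
      Metric.isBounded_ball, ?_⟩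
    rw [Set.disjoint_left]
    intro x hx
    exact hb (Metric.closure_ball_subset_closedBall (frontier_subset_closure hx))
  set K : Set ℂ := E ∩ Metric.closedBall a 1 with hK
  have hKc : IsCompact K := (isCompact_closedBall a 1).inter_left hE
  have : CompactSpace K := isCompact_iff_compactSpace.1 hKc
  have hKtd : IsTotallyDisconnected K := fun t ht => htd t (ht.trans Set.inter_subset_left)
  have : TotallyDisconnectedSpace K := totallyDisconnectedSpace_subtype_iff.2 hKtd
  have haK : a ∈ K := ⟨haE, Metric.mem_closedBall_self zero_le_one⟩
  obtain ⟨W, hW, haW, hWs⟩ := compact_exists_isClopen_in_isOpen (x := (⟨a, haK⟩ : K))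
    (U := Subtype.val ⁻¹' Metric.ball a 1)
    (Metric.isOpen_ball.preimage continuous_subtype_val) (Metric.mem_ball_self one_pos)
  set C : Set ℂ := Subtype.val '' W
  set D : Set ℂ := (E \ Metric.ball a 1) ∪ Subtype.val '' Wᶜ with hD
  have hC : IsClosed C := (hW.isClosed.isCompact.image continuous_subtype_val).isClosed
  have hDc : IsClosed D := (hE.inter Metric.isOpen_ball.isClosed_compl).union
    (hW.compl.isClosed.isCompact.image continuous_subtype_val).isClosed
  have hCD : C ⊆ Dᶜ ∩ Metric.ball a 1 := by
    rintro _ ⟨x, hx, rfl⟩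
    refine ⟨?_, hWs hx⟩
    rintro (h | ⟨y, hy, hxy⟩)
    · exact h.2 (hWs hx)
    · exact hy (Subtype.ext hxy ▸ hx)
  obtain ⟨V, hVo, hCV, hVs⟩ := normal_exists_closure_subset hC
    (hDc.isOpen_compl.inter Metric.isOpen_ball) hCD
  refine ⟨V, hVo, hCV ⟨_, haW, rfl⟩, Metric.isBounded_ball.subset
    (subset_closure.trans (hVs.trans Set.inter_subset_right)), ?_⟩
  rw [Set.disjoint_left]
  intro x hx hxE
  rw [hVo.frontier_eq] at hx
  obtain ⟨h1, h2⟩ := hVs hx.1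
  have hxK : x ∈ K := ⟨hxE, Metric.ball_subset_closedBall h2⟩
  by_cases hxW : (⟨x, hxK⟩ : K) ∈ W
  · exact hx.2 (hCV ⟨_, hxW, rfl⟩)
  · exact h1 (Or.inr ⟨⟨x, hxK⟩, hxW, rfl⟩)

lemma elh_compact_lift (f : ℂ → ℂ) (ho : IsOpenMap f) (F : Set ℂ) (hF : IsCompact F)
    (hs : F ⊆ Set.range f) : ∃ K, IsCompact K ∧ F ⊆ f '' K := by
  obtain ⟨n, hn⟩ := hF.elim_directed_cover (fun n : ℕ => f '' Metric.ball 0 n)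
    (fun n => ho _ Metric.isOpen_ball) (by
      intro x hx
      obtain ⟨z, rfl⟩ := hs hx
      obtain ⟨n, hn⟩ := exists_nat_gt ‖z‖
      exact Set.mem_iUnion.2 ⟨n, z, by simpa using hn, rfl⟩)
    (Monotone.directed_le fun m n h => Set.image_mono (Metric.ball_subset_ball (by exact_mod_cast h)))
  exact ⟨Metric.closedBall 0 n, isCompact_closedBall _ _,
    hn.trans (Set.image_mono Metric.ball_subset_closedBall)⟩

lemma elh_hurwitz (G : ℕ → ℂ → ℂ) (h : ℂ → ℂ) (hG : ∀ n, Differentiable ℂ (G n))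
    (hn : ∀ n z, G n z ≠ 0) (hh : Differentiable ℂ h) (h0 : h 0 ≠ 0)
    (hc : TendstoLocallyUniformlyOn G h atTop Set.univ) (w : ℂ) : h w ≠ 0 := by
  intro hw
  have hev : ∀ᶠ z in 𝓝[≠] w, h z ≠ 0 := by
    rcases (hh.analyticAt w).eventually_eq_zero_or_eventually_ne_zero with h1 | h1
    · exfalso
      have ha : AnalyticOnNhd ℂ h Set.univ := fun z _ => hh.analyticAt z
      exact h0 (ha.eqOn_zero_of_preconnected_of_eventuallyEq_zero isPreconnected_univ
        (Set.mem_univ w) h1 (Set.mem_univ 0))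
    · exact h1
  rw [eventually_nhdsWithin_iff] at hev
  obtain ⟨r, hr, hb⟩ := Metric.nhds_basis_closedBall.mem_iff.1 hev
  have hS : IsCompact (Metric.sphere w r) := isCompact_sphere w r
  have hSne : (Metric.sphere w r).Nonempty := NormedSpace.sphere_nonempty.2 hr.le
  obtain ⟨x, hx, hmin⟩ := hS.exists_isMinOn hSne (hh.continuous.norm.continuousOn)
  have hm : 0 < ‖h x‖ := norm_pos_iff.2 (hb (Metric.sphere_subset_closedBall hx)
    (by rintro rfl; simp at hx; exact hr.ne hx))
  set m := ‖h x‖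
  have hu := (tendstoLocallyUniformlyOn_iff_forall_isCompact isOpen_univ).1 hc _
    (Set.subset_univ _) (isCompact_closedBall w r)
  obtain ⟨n, hn1⟩ := (Metric.tendstoUniformlyOn_iff.1 hu (m / 2) (by positivity)).exists
  have hbd : ∀ z ∈ frontier (Metric.ball w r), ‖(G n z)⁻¹‖ ≤ (m / 2)⁻¹ := by
    intro z hz
    rw [frontier_ball w hr.ne'] at hz
    have h1 := hn1 z (Metric.sphere_subset_closedBall hz)
    have h2 : m ≤ ‖h z‖ := hmin hz
    rw [dist_eq_norm] at h1
    have h3 := norm_sub_norm_le (h z) (G n z)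
    rw [norm_inv]
    exact inv_anti₀ (by positivity) (by linarith)
  have hd : Differentiable ℂ (fun z => (G n z)⁻¹) := (hG n).inv (hn n)
  have h4 := Complex.norm_le_of_forall_mem_frontier_norm_le Metric.isBounded_ball
    hd.diffContOnCl hbd (subset_closure (Metric.mem_ball_self hr))
  have h5 := hn1 w (Metric.mem_closedBall_self hr.le)
  rw [hw, dist_zero_left] at h5
  rw [norm_inv] at h4
  have h6 := (inv_le_inv₀ (norm_pos_iff.2 (hn n w)) (by positivity)).1 h4
  linarith

/-- Proposition 3.16, part 2: the image of the right composition mapping `R_f` is closed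
in `elh(ℂ)` with the topology of uniform convergence on compact subsets: if `gₙ ∈ elh(ℂ)`
and `gₙ ∘ f` converges uniformly on every compact subset of `ℂ` to `g`, then `g = h ∘ f`
for some `h ∈ elh(ℂ)`. -/
theorem rightComp_image_closed (f : ℂ → ℂ) (hf : elh f)
    (G : ℕ → ℂ → ℂ) (g : ℂ → ℂ) (hG : ∀ n, elh (G n))
    (hconv : ∀ K : Set ℂ, IsCompact K →
      TendstoUniformlyOn (fun n => (G n) ∘ f) g atTop K) :
    ∃ h : ℂ → ℂ, elh h ∧ g = h ∘ f := by
  have h0 : ∃ z w, f z ≠ f w := by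
    by_contra h
    push Not at h
    have : f = fun _ => f 0 := funext fun z => h z 0
    have h2 := hf.2.2
    rw [this] at h2
    simp at h2
  have ho := elh_isOpenMap f hf.1 h0
  have htd := elh_totDisc f hf.1 h0
  have hloc : ∀ a : ℂ, ∃ V : Set ℂ, IsOpen V ∧ a ∈ V ∧ UniformCauchySeqOn G atTop V := by
    intro a
    obtain ⟨V, hVo, haV, hVb, hVd⟩ := elh_nhd _ ho.isOpen_range.isClosed_compl htd a
    refine ⟨V, hVo, haV, ?_⟩
    have hFc : IsCompact (frontier V) :=
      Metric.isCompact_of_isClosed_isBounded isClosed_frontier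
        (hVb.closure.subset frontier_subset_closure)
    obtain ⟨K, hKc, hK⟩ := elh_compact_lift f ho _ hFc (Set.disjoint_compl_right_iff_subset.1 hVd)
    have hu := (hconv K hKc).uniformCauchySeqOn
    rw [Metric.uniformCauchySeqOn_iff] at hu ⊢
    intro ε hε
    obtain ⟨N, hN⟩ := hu (ε / 2) (by positivity)
    refine ⟨N, fun m hm n hn x hx => ?_⟩
    have := Complex.norm_le_of_forall_mem_frontier_norm_le hVb
      ((hG m).1.sub (hG n).1).diffContOnCl (C := ε / 2) (by
        intro z hz
        obtain ⟨y, hy, rfl⟩ := hK hz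
        have := hN m hm n hn y hy
        rw [dist_eq_norm] at this
        exact this.le) (subset_closure hx)
    rw [dist_eq_norm]
    simp only [Pi.sub_apply] at this
    linarith
  have hlim : ∀ a, ∃ l, Tendsto (fun n => G n a) atTop (𝓝 l) := by
    intro a
    obtain ⟨V, -, haV, hV⟩ := hloc a
    exact cauchySeq_tendsto_of_complete (hV.cauchySeq haV)
  choose h hh using hlim
  have htl : TendstoLocallyUniformlyOn G h atTop Set.univ := by
    intro u hu x _
    obtain ⟨V, hVo, haV, hV⟩ := hloc x
    exact ⟨V, mem_nhdsWithin_of_mem_nhds (hVo.mem_nhds haV),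
      hV.tendstoUniformlyOn_of_tendsto (fun y _ => hh y) u hu⟩
  have hGd : ∀ᶠ n in atTop, DifferentiableOn ℂ (G n) Set.univ :=
    Eventually.of_forall fun n => (hG n).1.differentiableOn
  have hhd : Differentiable ℂ h :=
    differentiableOn_univ.1 (htl.differentiableOn hGd isOpen_univ)
  have htl' := htl.deriv hGd isOpen_univ
  have hd0 : deriv h 0 = 1 := by
    refine tendsto_nhds_unique (htl'.tendsto_at (Set.mem_univ 0)) ?_
    simp only [Function.comp_apply, (hG _).2.2]
    exact tendsto_const_nhds
  have hdd : ∀ {k : ℂ → ℂ}, Differentiable ℂ k → Differentiable ℂ (deriv k) :=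
    fun hk z => (hk.analyticAt z).deriv.differentiableAt
  refine ⟨h, ⟨hhd, ?_, hd0⟩, ?_⟩
  · exact elh_hurwitz _ _ (fun n => hdd (hG n).1) (fun n => (hG n).2.1) (hdd hhd)
      (by rw [hd0]; exact one_ne_zero) htl'
  · funext z
    exact tendsto_nhds_unique
      ((hconv {z} isCompact_singleton).tendsto_at (Set.mem_singleton z)) (hh (f z))
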